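/- arXiv:2309.16997 — 13 statements merged into one kernel-verified Lean document; each statement's English description precedes it below -/
import Mathlib

section
/- Lemma 3.6: Assume λ is a regular cardinal and 𝓛 satisfies the λ-array condition. Let ā ∈ (ι → M) and let ā_α ∈ φ_ā for every α < λ. Then there exist sequences ⟨β_i : i < λ⟩ and ⟨γ_i : i < λ⟩ of ordinals below λ such that (a) ⟨β_i⟩ is increasing, (b) ⟨γ_i⟩ is increasing, (c) β_i < γ_i < β_{i+1} for every i < λ, and (d) for every i < λ the tuple ā − ā_{β_i} + ā_{γ_i} is equivalent to ā. -/
/-!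
The element `a` lies in `A α₁ α₂` as soon as three indices `α₁ < α₂ < α₃` satisfy the
inclusions of the array condition for `A α β = φ (a - a_α + a_β)`, because
`a = (a - a_{α₁} + a_{α₂}) - (a - a_{α₁} + a_{α₃}) + (a - a_{α₂} + a_{α₃})` and all three summands
lie in the subgroup `A α₁ α₂`. The reverse inclusion `φ (a - a_α + a_β) ⊆ φ a` holds because `φ a`
is a subgroup. Applying this to tails of the sequence `a_α` gives good pairs beyond any `δ < λ`
(`exists_good_pair`), and regularity of `λ` allows stringing `λ` such pairs together by
transfinite recursion (`exists_interleaved`).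
-/

universe u

/-- In an additive frame with the array condition, every `δ < λ` lies below some good pair
`b < g < λ`, obtained by shifting the index set of the array by `δ + 1`. -/
theorem exists_good_pair
    {M : Type*} [AddCommGroup M] {ι : Type*}
    (L : Set (Set (ι → M)))
    (hsub : ∀ A ∈ L, ∃ S : AddSubgroup (ι → M), A = ↑S)
    (φ : (ι → M) → Set (ι → M))
    (hφL : ∀ a, φ a ∈ L)
    (hφmem : ∀ a, a ∈ φ a)
    (hφmin : ∀ a, ∀ ψ ∈ L, a ∈ ψ → φ a ⊆ ψ)
    (lam : Cardinal.{u}) (hlam : Cardinal.aleph0 ≤ lam)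
    (harray : ∀ A : Ordinal.{u} → Ordinal.{u} → Set (ι → M),
      (∀ α β : Ordinal, α < β → β < lam.ord → A α β ∈ L) →
      ∃ α₁ α₂ α₃ : Ordinal, α₁ < α₂ ∧ α₂ < α₃ ∧ α₃ < lam.ord ∧
        A α₁ α₃ ⊆ A α₁ α₂ ∧ A α₂ α₃ ⊆ A α₁ α₂)
    (a : ι → M) (aseq : Ordinal.{u} → (ι → M))
    (haseq : ∀ α : Ordinal, α < lam.ord → aseq α ∈ φ a)
    (δ : Ordinal.{u}) (hδ : δ < lam.ord) :
    ∃ b g : Ordinal.{u}, δ < b ∧ b < g ∧ g < lam.ord ∧ φ (a - aseq b + aseq g) = φ a := by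
  obtain ⟨α₁, α₂, α₃, h12, h23, h3, hA13, hA23⟩ := harray
    (fun α β => φ (a - aseq (δ + 1 + α) + aseq (δ + 1 + β))) (fun _ _ _ _ => hφL _)
  have hδ1 : δ + 1 < lam.ord := (Cardinal.isSuccLimit_ord hlam).add_one_lt hδ
  have hlt : ∀ α < lam.ord, δ + 1 + α < lam.ord := fun α hα =>
    Ordinal.isPrincipal_add_ord hlam hδ1 hα
  have h2 : α₂ < lam.ord := h23.trans h3
  refine ⟨δ + 1 + α₁, δ + 1 + α₂, ?_, by simpa using h12, hlt _ h2, ?_⟩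
  · exact (Order.lt_add_one_iff.2 le_rfl).trans_le le_self_add
  apply Set.Subset.antisymm
  · refine hφmin _ _ (hφL a) ?_
    obtain ⟨S, hS⟩ := hsub _ (hφL a)
    have h0 := hφmem a
    have h1' := haseq _ (hlt _ (h12.trans h2))
    have h2' := haseq _ (hlt _ h2)
    rw [hS] at h0 h1' h2' ⊢
    exact S.add_mem (S.sub_mem h0 h1') h2'
  · refine hφmin _ _ (hφL _) ?_
    have m12 := hφmem (a - aseq (δ + 1 + α₁) + aseq (δ + 1 + α₂))
    have m13 := hA13 (hφmem (a - aseq (δ + 1 + α₁) + aseq (δ + 1 + α₃)))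
    have m23 := hA23 (hφmem (a - aseq (δ + 1 + α₂) + aseq (δ + 1 + α₃)))
    obtain ⟨S, hS⟩ := hsub _ (hφL (a - aseq (δ + 1 + α₁) + aseq (δ + 1 + α₂)))
    rw [hS] at m12 m13 m23 ⊢
    have key := S.add_mem (S.sub_mem m12 m13) m23
    have e : a - aseq (δ + 1 + α₁) + aseq (δ + 1 + α₂)
        - (a - aseq (δ + 1 + α₁) + aseq (δ + 1 + α₃))
        + (a - aseq (δ + 1 + α₂) + aseq (δ + 1 + α₃)) = a := by abel
    rwa [e] at key

/-- The supremum of all `G (supBelow G j)` with `j < i`: the least stage at which the `i`-th pair may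
be chosen, when `G δ` is the upper member of the pair chosen beyond `δ`. -/
noncomputable def supBelow (G : Ordinal.{u} → Ordinal.{u}) (i : Ordinal.{u}) : Ordinal.{u} :=
  ⨆ j : Set.Iio i, G (supBelow G j.1)
termination_by i
decreasing_by exact j.2

theorem le_supBelow (G : Ordinal.{u} → Ordinal.{u}) {i j : Ordinal.{u}} (h : j < i) :
    G (supBelow G j) ≤ supBelow G i := by
  rw [supBelow.eq_1 G i]
  exact Ordinal.le_iSup (fun j : Set.Iio i => G (supBelow G j.1)) ⟨j, h⟩

theorem supBelow_lt {lam : Cardinal.{u}} (hreg : lam.IsRegular) (G : Ordinal.{u} → Ordinal.{u})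
    (hG : ∀ δ < lam.ord, G δ < lam.ord) (i : Ordinal.{u}) (hi : i < lam.ord) :
    supBelow G i < lam.ord := by
  induction i using WellFoundedLT.induction with
  | ind i ih =>
    rw [supBelow]
    apply Ordinal.lift_iSup_lt_of_lt_cof
    · rw [← Ordinal.lift_cof, hreg.cof_ord, Cardinal.lift_id'.{u, u + 1}, Cardinal.mk_Iio_ordinal]
      exact Cardinal.lift_lt.2 (Cardinal.lt_ord.1 hi)
    · rintro ⟨j, hj⟩
      exact hG _ (ih j hj (lt_trans hj hi))

/-- If good pairs `b < g` exist beyond every `δ < λ`, with `λ` regular, then `λ` many of them can be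
chosen so that each lies strictly above all the earlier ones. -/
theorem exists_interleaved {lam : Cardinal.{u}} (hreg : lam.IsRegular)
    (P : Ordinal.{u} → Ordinal.{u} → Prop)
    (hP : ∀ δ < lam.ord, ∃ b g, δ < b ∧ b < g ∧ g < lam.ord ∧ P b g) :
    ∃ β γ : Ordinal.{u} → Ordinal.{u},
      (∀ i j, i < j → j < lam.ord → γ i < β j) ∧
      (∀ i, i < lam.ord → β i < γ i ∧ γ i < lam.ord ∧ P (β i) (γ i)) := by
  choose! B G hB hBG hG hBP using hP
  have hlt := supBelow_lt hreg G hG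
  refine ⟨fun i => B (supBelow G i), fun i => G (supBelow G i), fun i j hij hj => ?_,
    fun i hi => ⟨hBG _ (hlt i hi), hG _ (hlt i hi), hBP _ (hlt i hi)⟩⟩
  exact (le_supBelow G hij).trans_lt (hB _ (hlt j hj))


/-- Lemma 3.6: in an additive frame with the λ-array condition, given a tuple `a`
and tuples `aseq α ∈ φ a` for `α < λ`, there are increasing sequences `β, γ` below `λ`
with `β i < γ i < β (i+1)` such that `a - aseq (β i) + aseq (γ i)` is equivalent to `a`. -/
theorem stmt_0
    {M : Type*} [AddCommGroup M] {ι : Type*}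
    (L : Set (Set (ι → M)))
    (hsub : ∀ A ∈ L, ∃ S : AddSubgroup (ι → M), A = ↑S)
    (φ : (ι → M) → Set (ι → M))
    (hφL : ∀ a, φ a ∈ L)
    (hφmem : ∀ a, a ∈ φ a)
    (hφmin : ∀ a, ∀ ψ ∈ L, a ∈ ψ → φ a ⊆ ψ)
    (lam : Cardinal) (hreg : lam.IsRegular)
    (harray : ∀ A : Ordinal → Ordinal → Set (ι → M),
      (∀ α β : Ordinal, α < β → β < lam.ord → A α β ∈ L) →
      ∃ α₁ α₂ α₃ : Ordinal, α₁ < α₂ ∧ α₂ < α₃ ∧ α₃ < lam.ord ∧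
        A α₁ α₃ ⊆ A α₁ α₂ ∧ A α₂ α₃ ⊆ A α₁ α₂)
    (a : ι → M) (aseq : Ordinal → (ι → M))
    (haseq : ∀ α : Ordinal, α < lam.ord → aseq α ∈ φ a) :
    ∃ β γ : Ordinal → Ordinal,
      (∀ i j : Ordinal, i < j → j < lam.ord → β i < β j) ∧
      (∀ i j : Ordinal, i < j → j < lam.ord → γ i < γ j) ∧
      (∀ i : Ordinal, i < lam.ord → β i < lam.ord ∧ γ i < lam.ord ∧
        β i < γ i ∧ γ i < β (i + 1)) ∧
      (∀ i : Ordinal, i < lam.ord →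
        φ (a - aseq (β i) + aseq (γ i)) = φ a) := by
  obtain ⟨β, γ, h1, h2⟩ := exists_interleaved hreg
    (fun b g => φ (a - aseq b + aseq g) = φ a)
    (exists_good_pair L hsub φ hφL hφmem hφmin lam hreg.aleph0_le harray a aseq haseq)
  refine ⟨β, γ, fun i j hij hj => ?_, fun i j hij hj => ?_, fun i hi => ?_, fun i hi => (h2 i hi).2.2⟩
  · exact (h2 i (hij.trans hj)).1.trans (h1 i j hij hj)
  · exact (h1 i j hij hj).trans (h2 j hj).1
  · obtain ⟨hb, hg, -⟩ := h2 i hi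
    exact ⟨hb.trans hg, hg, hb, h1 i (i + 1) (Order.lt_add_one_iff.2 le_rfl)
      ((Cardinal.isSuccLimit_ord hreg.aleph0_le).add_one_lt hi)⟩
end

section
/- Corollary 3.7(1): Assume λ is a regular cardinal and 𝓛 satisfies the λ-array condition. If ā ∈ (ι → M) and φ_ā has cardinality ≥ λ, then there exists b̄ ∈ φ_ā with b̄ ≠ ā such that b̄ is equivalent to ā (i.e. φ_b̄ = φ_ā). -/
/-!
Choose distinct `c α ∈ φ a` for `α < λ` and apply the array condition to
`A α β = φ (a - c α + c β)`. For the resulting `α₁ < α₂ < α₃`, the subgroup `A α₁ α₂` contains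
`a - c α₁ + c α₂`, `a - c α₁ + c α₃` and `a - c α₂ + c α₃`, and
`(a - c α₁ + c α₂) + (a - c α₂ + c α₃) - (a - c α₁ + c α₃) = a`.
So `b = a - c α₁ + c α₂`, which lies in `φ a` and differs from `a`, satisfies `a ∈ φ b`;
minimality of `φ a` and `φ b` then gives `φ b = φ a`.
-/

/-- Corollary 3.7(1): in an additive frame with the λ-array condition, if `φ a` has
cardinality ≥ λ then some `b ∈ φ a` with `b ≠ a` is equivalent to `a`. -/
theorem stmt_1
    {M : Type*} [AddCommGroup M] {ι : Type*}
    (L : Set (Set (ι → M)))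
    (hsub : ∀ A ∈ L, ∃ S : AddSubgroup (ι → M), A = ↑S)
    (φ : (ι → M) → Set (ι → M))
    (hφL : ∀ a, φ a ∈ L)
    (hφmem : ∀ a, a ∈ φ a)
    (hφmin : ∀ a, ∀ ψ ∈ L, a ∈ ψ → φ a ⊆ ψ)
    (lam : Cardinal) (hreg : lam.IsRegular)
    (harray : ∀ A : Ordinal → Ordinal → Set (ι → M),
      (∀ α β : Ordinal, α < β → β < lam.ord → A α β ∈ L) →
      ∃ α₁ α₂ α₃ : Ordinal, α₁ < α₂ ∧ α₂ < α₃ ∧ α₃ < lam.ord ∧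
        A α₁ α₃ ⊆ A α₁ α₂ ∧ A α₂ α₃ ⊆ A α₁ α₂)
    (a : ι → M) (hbig : lam ≤ Cardinal.mk ↥(φ a)) :
    ∃ b ∈ φ a, b ≠ a ∧ φ b = φ a := by
  classical
  -- an injective enumeration of `λ` many elements of `φ a`
  obtain ⟨e⟩ : Nonempty (Set.Iio lam.ord ↪ ↥(φ a)) := by
    rw [← Cardinal.lift_mk_le', Cardinal.mk_Iio_ordinal, Cardinal.card_ord]
    simpa using hbig
  -- the value outside `λ` is irrelevant
  let c : Ordinal → (ι → M) := fun α => if h : α < lam.ord then (e ⟨α, h⟩ : ι → M) else a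
  have hc : ∀ α (h : α < lam.ord), c α = e ⟨α, h⟩ := fun α h => dif_pos h
  obtain ⟨α₁, α₂, α₃, h12, h23, h3, hA, hB⟩ :=
    harray (fun α β => φ (a - c α + c β)) (fun _ _ _ _ => hφL _)
  have h2 := h23.trans h3
  have h1 := h12.trans h2
  have hb : a - c α₁ + c α₂ ∈ φ a := by
    obtain ⟨S, hS⟩ := hsub _ (hφL a)
    have m1 : c α₁ ∈ φ a := hc α₁ h1 ▸ (e _).2
    have m2 : c α₂ ∈ φ a := hc α₂ h2 ▸ (e _).2
    have m0 := hφmem a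
    rw [hS] at m0 m1 m2 ⊢
    exact S.add_mem (S.sub_mem m0 m1) m2
  refine ⟨_, hb, fun h => ?_, (hφmin _ _ (hφL a) hb).antisymm (hφmin a _ (hφL _) ?_)⟩
  · have heq : c α₂ = c α₁ := by
      rw [sub_add_eq_add_sub, sub_eq_iff_eq_add] at h
      exact add_left_cancel h
    rw [hc _ h1, hc _ h2] at heq
    exact h12.ne' (congrArg Subtype.val (e.injective (Subtype.ext heq)))
  · have m12 := hφmem (a - c α₁ + c α₂)
    have m13 := hA (hφmem (a - c α₁ + c α₃))
    have m23 := hB (hφmem (a - c α₂ + c α₃))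
    obtain ⟨S, hS⟩ := hsub _ (hφL (a - c α₁ + c α₂))
    rw [hS] at m12 m13 m23 ⊢
    have key := S.sub_mem (S.add_mem m12 m23) m13
    have hkey : (a - c α₁ + c α₂) + (a - c α₂ + c α₃) - (a - c α₁ + c α₃) = a := by abel
    rwa [hkey] at key
end

section
/- Lemma 3.8: Assume κ is a regular cardinal and 𝓛 satisfies the κ-chain condition. Let κ' be a regular cardinal with κ' ≥ κ, and let ā_α ∈ (ι → M) for α < κ'. Then there exists α < κ' such that the set {β < κ' : ā_β ∈ φ_{ā_α}} is unbounded in κ'. (Taking κ' = κ gives clause (1) of the lemma; general κ' gives clause (2).) -/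
/-!
If every set `{β < κ' : ā_β ∈ φ_{ā_α}}` were bounded, say by `f α < κ'`, then the recursion
`g i = sup_{j < i} f (g j)` would stay below `κ'` for `i < κ` (as `κ'` is regular and `i` has
cardinality less than `κ ≤ κ'`) and satisfy `f (g i) ≤ g j` whenever `i < j`. Hence
`ā_{g j} ∉ φ_{ā_{g i}}` for all `i < j < κ`. But the chain condition applied to
`⟨φ_{ā_{g i}} : i < κ⟩` gives `i < j` with `ā_{g j} ∈ φ_{ā_{g j}} ⊆ φ_{ā_{g i}}`.
-/

theorem exists_supRec (f : Ordinal → Ordinal) :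
    ∃ g : Ordinal → Ordinal, ∀ i, g i = ⨆ j : Set.Iio i, f (g j) :=
  ⟨WellFoundedLT.fix fun i ih => ⨆ j : Set.Iio i, f (ih j j.2),
    fun i => WellFoundedLT.fix_eq _ i⟩

/-- Lemma 3.8: in a general frame with the κ-chain condition, for any regular κ' ≥ κ and
any sequence ⟨ā_α : α < κ'⟩ of tuples, there is α < κ' such that
{β < κ' : ā_β ∈ φ_{ā_α}} is unbounded in κ'. -/
theorem stmt_5
    {M : Type*} {ι : Type*}
    (L : Set (Set (ι → M)))
    (φ : (ι → M) → Set (ι → M))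
    (hφL : ∀ a, φ a ∈ L)
    (hφmem : ∀ a, a ∈ φ a)
    (hφmin : ∀ a, ∀ ψ ∈ L, a ∈ ψ → φ a ⊆ ψ)
    (kap : Cardinal) (hkreg : kap.IsRegular)
    (hchain : ∀ A : Ordinal → Set (ι → M),
      (∀ α : Ordinal, α < kap.ord → A α ∈ L) →
      ∃ α β : Ordinal, α < β ∧ β < kap.ord ∧ A β ⊆ A α)
    (kap' : Cardinal) (hk'reg : kap'.IsRegular) (hkk' : kap ≤ kap')
    (aseq : Ordinal → (ι → M)) :
    ∃ α : Ordinal, α < kap'.ord ∧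
      ∀ η : Ordinal, η < kap'.ord →
        ∃ β : Ordinal, η ≤ β ∧ β < kap'.ord ∧ aseq β ∈ φ (aseq α) := by
  by_contra! hcon
  choose! f hf hfa using hcon
  obtain ⟨g, hg⟩ := exists_supRec f
  have hlt : ∀ i : Ordinal, i < kap.ord → g i < kap'.ord := by
    intro i
    induction i using WellFoundedLT.induction with
    | ind i ih =>
      intro hi
      rw [hg i]
      refine Ordinal.lift_iSup_lt_of_lt_cof ?_ fun j => hf _ (ih j j.2 (j.2.trans hi))
      have hcard : i.card < kap' := (Cardinal.lt_ord.1 hi).trans_le hkk'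
      rw [Cardinal.mk_Iio_ordinal, Cardinal.lift_lift, ← Ordinal.lift_cof, hk'reg.cof_ord]
      exact Cardinal.lift_lt.2 hcard
  obtain ⟨i, j, hij, hj, hsub⟩ := hchain (fun i => φ (aseq (g i))) fun _ _ => hφL _
  have hle : f (g i) ≤ g j := by
    rw [hg j]
    exact Ordinal.le_iSup (fun k : Set.Iio j => f (g k)) ⟨i, hij⟩
  exact hfa (g i) (hlt i (hij.trans hj)) (g j) hle (hlt j hj) (hsub (hφmem _))
end

section
/- Lemma 4.2(a): Assume κ is a regular cardinal and 𝓛 satisfies the κ-chain condition. Then for every tuple ā ∈ (ι → M), the closure cl(ā, M) has cardinality < κ. -/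
/-!
Write `F b` for the fiber `{c | (a, c) ∈ φ (a, b)}`. If the closure had cardinality at least `κ`,
then by regularity no union of fewer than `κ` fibers of closure points could cover it, so one could
choose closure points `b_α`, `α < κ`, with `b_α ∉ F b_β` whenever `β < α` (`exists_avoiding_seq`).
The chain condition applied to `A_α = φ (a, b_α)` yields `α < β` with `A_β ⊆ A_α`; since
`(a, b_β) ∈ A_β`, this puts `b_β` in `F b_α`, a contradiction.
-/

universe u

open Classical in
/-- A transfinite sequence chosen greedily: its value at `α` is an element of `C` outside `F (b β)`
for every `β < α`, if there is one, and the default value `d` otherwise. -/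
noncomputable def avoidingSeq {M : Type u} (C : Set M) (F : M → Set M) (d : M)
    (α : Ordinal.{u}) : M :=
  if h : ∃ x ∈ C, ∀ β, (_ : β < α) → x ∉ F (avoidingSeq C F d β) then h.choose else d
termination_by α

/-- Regularity enters here: fewer than `κ` sets, each of size less than `κ`, cannot cover `C`, so the
greedy choice never runs out before stage `κ`. -/
theorem exists_avoiding_seq {M : Type u} {κ : Cardinal.{u}} (hκ : κ.IsRegular)
    (C : Set M) (F : M → Set M) (hC : κ ≤ Cardinal.mk C)
    (hF : ∀ x ∈ C, Cardinal.mk (F x) < κ) :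
    ∃ b : Ordinal.{u} → M, ∀ α < κ.ord, b α ∈ C ∧ ∀ β < α, b α ∉ F (b β) := by
  have hne : Nonempty C := Cardinal.mk_ne_zero_iff.1 (hκ.pos.trans_le hC).ne'
  obtain ⟨d, -⟩ := hne
  refine ⟨avoidingSeq C F d, fun α => ?_⟩
  induction α using WellFoundedLT.induction with
  | _ α ih =>
    intro hα
    have hex : ∃ x ∈ C, ∀ β, (_ : β < α) → x ∉ F (avoidingSeq C F d β) := by
      by_contra! hcover
      -- The predecessors of `α` are indexed by `α.ToType`, which lives in the universe of `M`.
      have hsub : C ⊆ ⋃ i : α.ToType, F (avoidingSeq C F d (Ordinal.ToType.mk.symm i).1) := by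
        intro x hx
        obtain ⟨β, hβ, hxβ⟩ := hcover x hx
        exact Set.mem_iUnion.2 ⟨Ordinal.ToType.mk ⟨β, hβ⟩, by simpa using hxβ⟩
      refine (hC.trans (Cardinal.mk_le_mk_of_subset hsub)).not_gt ?_
      refine (Cardinal.card_iUnion_lt_iff_forall_of_isRegular hκ ?_).2 fun i => ?_
      · simpa using Cardinal.lt_ord.1 hα
      · have hi : (Ordinal.ToType.mk.symm i).1 < α := (Ordinal.ToType.mk.symm i).2
        exact hF _ (ih _ hi (hi.trans hα)).1
    rw [avoidingSeq, dif_pos hex]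
    exact hex.choose_spec


/-- Lemma 4.2(a): in a general frame (on pairs (ā, b)) with the κ-chain condition,
the closure cl(ā, M) = {b : |{c : (ā,c) ∈ φ_{(ā,b)}}| < κ} has cardinality < κ. -/
theorem stmt_6
    {M : Type*} {ι : Type*}
    (L : Set (Set ((ι → M) × M)))
    (φ : ((ι → M) × M) → Set ((ι → M) × M))
    (hφL : ∀ p, φ p ∈ L)
    (hφmem : ∀ p, p ∈ φ p)
    (hφmin : ∀ p, ∀ ψ ∈ L, p ∈ ψ → φ p ⊆ ψ)
    (kap : Cardinal) (hkreg : kap.IsRegular)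
    (hchain : ∀ A : Ordinal → Set ((ι → M) × M),
      (∀ α : Ordinal, α < kap.ord → A α ∈ L) →
      ∃ α β : Ordinal, α < β ∧ β < kap.ord ∧ A β ⊆ A α) :
    ∀ a : ι → M,
      Cardinal.mk ↥{b : M | Cardinal.mk ↥{c : M | (a, c) ∈ φ (a, b)} < kap} < kap := by
  intro a
  by_contra! hC
  obtain ⟨b, hb⟩ := exists_avoiding_seq hkreg _ (fun x => {c : M | (a, c) ∈ φ (a, x)}) hC
    fun x hx => hx
  obtain ⟨α, β, hαβ, hβ, hsub⟩ := hchain (fun α => φ (a, b α)) fun α _ => hφL _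
  exact (hb β hβ).2 α hαβ (hsub (hφmem _))
end

section
/- Lemma 4.2(c): Assume κ is a regular cardinal and the following hold: (i) for every A ∈ 𝓛₁ and C ∈ 𝓛₂ the set A ∩ {(x̄, y) : the fiber {z ∈ M : (x̄, y, z) ∈ C} has cardinality ≥ κ} belongs to 𝓛₁; (ii) for every C ∈ 𝓛₂ the set {(x̄, w) : ∃ y ∈ M, (x̄, y, w) ∈ C} belongs to 𝓛₁; (iii) for every A ∈ 𝓛₁ the set {(x̄, y, z) : (x̄, y) ∈ A} belongs to 𝓛₂; (iv) (dichotomy) for all pairs p, q ∈ (ι → M) × M, if φ_p ⊆ φ_q then φ_p = φ_q. Then for every ā ∈ (ι → M) and every b ∈ cl(ā, M), one has cl(ā⌢⟨b⟩, M) ⊆ cl(ā, M), where cl(ā⌢⟨b⟩, M) := {d ∈ M : the fiber {c ∈ M : (ā, b, c) ∈ φ_{(ā,b,d)}} has cardinality < κ}. -/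
/-!
The fiber of `φ₁ (a, d)` over `a` is covered by the fibers of `φ₂ (a, b, d)` over `(a, y)`, where
`(a, y)` ranges over `φ₁ (a, b)`: this uses closure under `∃`, and minimality of `φ₂ (a, b, d)`
against the cylinder over `φ₁ (a, b)`. There are fewer than `κ` such `y`. The dichotomy makes every
such `(a, y)` generate the same minimal set as `(a, b)`, so closure under `∃^κ` transfers smallness
of the fiber over `(a, b)` to all the others. Regularity of `κ` then bounds the union.
-/

/-- Lemma 4.2(c): under closure conditions (i)-(iii) on the families 𝓛₁, 𝓛₂ and the
dichotomy (iv), for `b ∈ cl(ā, M)` one has `cl(ā⌢⟨b⟩, M) ⊆ cl(ā, M)`. -/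
theorem stmt_7
    {M : Type*} {ι : Type*}
    (L₁ : Set (Set ((ι → M) × M)))
    (L₂ : Set (Set ((ι → M) × M × M)))
    (φ₁ : ((ι → M) × M) → Set ((ι → M) × M))
    (hφ₁L : ∀ p, φ₁ p ∈ L₁)
    (hφ₁mem : ∀ p, p ∈ φ₁ p)
    (hφ₁min : ∀ p, ∀ ψ ∈ L₁, p ∈ ψ → φ₁ p ⊆ ψ)
    (φ₂ : ((ι → M) × M × M) → Set ((ι → M) × M × M))
    (hφ₂L : ∀ t, φ₂ t ∈ L₂)
    (hφ₂mem : ∀ t, t ∈ φ₂ t)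
    (hφ₂min : ∀ t, ∀ ψ ∈ L₂, t ∈ ψ → φ₂ t ⊆ ψ)
    (kap : Cardinal) (hkreg : kap.IsRegular)
    (hi : ∀ A ∈ L₁, ∀ C ∈ L₂,
      (A ∩ {p : (ι → M) × M | kap ≤ Cardinal.mk ↥{z : M | (p.1, p.2, z) ∈ C}}) ∈ L₁)
    (hii : ∀ C ∈ L₂, {p : (ι → M) × M | ∃ y : M, (p.1, y, p.2) ∈ C} ∈ L₁)
    (hiii : ∀ A ∈ L₁, {t : (ι → M) × M × M | (t.1, t.2.1) ∈ A} ∈ L₂)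
    (hiv : ∀ p q : (ι → M) × M, φ₁ p ⊆ φ₁ q → φ₁ p = φ₁ q) :
    ∀ (a : ι → M) (b : M),
      b ∈ {b : M | Cardinal.mk ↥{c : M | (a, c) ∈ φ₁ (a, b)} < kap} →
      {d : M | Cardinal.mk ↥{c : M | (a, b, c) ∈ φ₂ (a, b, d)} < kap} ⊆
        {b : M | Cardinal.mk ↥{c : M | (a, c) ∈ φ₁ (a, b)} < kap} := by
  intro a b hb d hd
  simp only [Set.mem_setOf_eq] at hb hd ⊢
  have hC : ∀ y w, (a, y, w) ∈ φ₂ (a, b, d) → (a, y) ∈ φ₁ (a, b) := fun y w h =>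
    hφ₂min (a, b, d) _ (hiii _ (hφ₁L (a, b))) (hφ₁mem (a, b)) h
  -- A `κ`-large fiber over some `y` would, by the dichotomy, force the one over `b` to be large.
  have hfib : ∀ y ∈ {y : M | (a, y) ∈ φ₁ (a, b)},
      Cardinal.mk ↥{w : M | (a, y, w) ∈ φ₂ (a, b, d)} < kap := by
    intro y hy
    by_contra! hlarge
    have hsub := hφ₁min (a, y) _ (hi _ (hφ₁L (a, b)) _ (hφ₂L (a, b, d))) ⟨hy, hlarge⟩
    have heq := hiv (a, y) (a, b) (hsub.trans Set.inter_subset_left)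
    have hmem : (a, b) ∈ φ₁ (a, y) := heq ▸ hφ₁mem (a, b)
    exact (hsub hmem).2.not_gt hd
  have hcover : {c : M | (a, c) ∈ φ₁ (a, d)} ⊆
      ⋃ y ∈ {y : M | (a, y) ∈ φ₁ (a, b)}, {w : M | (a, y, w) ∈ φ₂ (a, b, d)} := by
    intro c hc
    obtain ⟨y, hy⟩ := hφ₁min (a, d) _ (hii _ (hφ₂L (a, b, d))) ⟨b, hφ₂mem (a, b, d)⟩ hc
    exact Set.mem_biUnion (hC y c hy) hy
  exact (Cardinal.mk_le_mk_of_subset hcover).trans_lt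
    ((Cardinal.card_biUnion_lt_iff_forall_of_isRegular hkreg hb).2 hfib)
end

section
/- Lemma 4.5: Let ā ∈ (ι → M) and b ∈ cl(ā, M). Then afn(b, ā) is a subset of cl(ā, M) and afn(b, ā) is affine, i.e. closed under the operation (x, y, z) ↦ x − y + z: if c₁, c₂, c₃ ∈ afn(b, ā) then c₁ − c₂ + c₃ ∈ afn(b, ā). -/
/-- The closure of `a` in `M` (Definition 4.1). -/
def cl {M ι : Type*} (kap : Cardinal)
    (φ : ((ι → M) × M) → Set ((ι → M) × M)) (a : ι → M) : Set M :=
  {b : M | Cardinal.mk ↥{c : M | (a, c) ∈ φ (a, b)} < kap}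

/-- `afn(b, ā)` (Definition 4.3). -/
def afn {M ι : Type*} (kap : Cardinal)
    (φ : ((ι → M) × M) → Set ((ι → M) × M)) (b : M) (a : ι → M) : Set M :=
  {c : M | c ∈ cl kap φ a ∧ (a, c) ∈ φ (a, b)}

/-- Lemma 4.5: in an additive frame, `afn(b, ā)` is a subset of `cl(ā, M)` and is affine,
i.e. closed under `(x, y, z) ↦ x - y + z`. -/
theorem stmt_8
    {M ι : Type*} [AddCommGroup M]
    (L : Set (Set ((ι → M) × M)))
    (hsub : ∀ A ∈ L, ∃ S : AddSubgroup ((ι → M) × M), A = ↑S)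
    (φ : ((ι → M) × M) → Set ((ι → M) × M))
    (hφL : ∀ p, φ p ∈ L)
    (hφmem : ∀ p, p ∈ φ p)
    (hφmin : ∀ p, ∀ ψ ∈ L, p ∈ ψ → φ p ⊆ ψ)
    (kap : Cardinal) (hkreg : kap.IsRegular)
    (a : ι → M) (b : M) (hb : b ∈ cl kap φ a) :
    afn kap φ b a ⊆ cl kap φ a ∧
      ∀ c₁ ∈ afn kap φ b a, ∀ c₂ ∈ afn kap φ b a, ∀ c₃ ∈ afn kap φ b a,
        c₁ - c₂ + c₃ ∈ afn kap φ b a := by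
  refine ⟨fun c hc => hc.1, fun c₁ h₁ c₂ h₂ c₃ h₃ => ?_⟩
  have hmem : (a, c₁ - c₂ + c₃) ∈ φ (a, b) := by
    obtain ⟨S, hS⟩ := hsub _ (hφL (a, b))
    have m₁ := h₁.2
    have m₂ := h₂.2
    have m₃ := h₃.2
    rw [hS] at m₁ m₂ m₃ ⊢
    simpa using S.add_mem (S.sub_mem m₁ m₂) m₃
  -- By minimality `φ (a, c₁ - c₂ + c₃) ⊆ φ (a, b)`, so its fiber over `a` is no larger.
  have hfib : {c : M | (a, c) ∈ φ (a, c₁ - c₂ + c₃)} ⊆ {c : M | (a, c) ∈ φ (a, b)} :=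
    fun _ hc => hφmin _ _ (hφL (a, b)) hmem hc
  exact ⟨lt_of_le_of_lt (Cardinal.mk_le_mk_of_subset hfib) hb, hmem⟩
end

section
/- Lemma 4.6(1): Let ā ∈ (ι → M) and b ∈ cl(ā, M). Then grp(b, ā) := {c₁ − c₂ : c₁, c₂ ∈ afn(b, ā)} is an additive subgroup of M. -/
/-- `grp(b, ā)` (Definition 4.3). -/
def grp {M ι : Type*} [AddCommGroup M] (kap : Cardinal)
    (φ : ((ι → M) × M) → Set ((ι → M) × M)) (b : M) (a : ι → M) : Set M :=
  {x : M | ∃ c₁ ∈ afn kap φ b a, ∃ c₂ ∈ afn kap φ b a, x = c₁ - c₂}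

/-- Lemma 4.6(1): in an additive frame, for `b ∈ cl(ā, M)` the set
`grp(b, ā) = {c₁ - c₂ : c₁, c₂ ∈ afn(b, ā)}` is an additive subgroup of `M`. -/
theorem stmt_9
    {M ι : Type*} [AddCommGroup M]
    (L : Set (Set ((ι → M) × M)))
    (hsub : ∀ A ∈ L, ∃ S : AddSubgroup ((ι → M) × M), A = ↑S)
    (φ : ((ι → M) × M) → Set ((ι → M) × M))
    (hφL : ∀ p, φ p ∈ L)
    (hφmem : ∀ p, p ∈ φ p)
    (hφmin : ∀ p, ∀ ψ ∈ L, p ∈ ψ → φ p ⊆ ψ)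
    (kap : Cardinal) (hkreg : kap.IsRegular)
    (a : ι → M) (b : M) (hb : b ∈ cl kap φ a) :
    ∃ S : AddSubgroup M, (S : Set M) = grp kap φ b a := by
  have hafn : ∀ c, (a, c) ∈ φ (a, b) → c ∈ afn kap φ b a := fun c hc =>
    ⟨show Cardinal.mk ↥{d : M | (a, d) ∈ φ (a, c)} < kap from
      lt_of_le_of_lt (Cardinal.mk_le_mk_of_subset (t := {d : M | (a, d) ∈ φ (a, b)})
        fun _ hd => hφmin (a, c) _ (hφL (a, b)) hc hd) hb, hc⟩
  obtain ⟨S, hS⟩ := hsub _ (hφL (a, b))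
  have mem : ∀ p, p ∈ φ (a, b) ↔ p ∈ S := fun p => by rw [hS]; rfl
  have hbS : (a, b) ∈ S := (mem _).1 (hφmem _)
  refine ⟨S.comap (AddMonoidHom.inr (ι → M) M), ?_⟩
  ext x
  constructor
  · intro hx
    have hx' : ((0 : ι → M), x) ∈ S := hx
    -- An element `x` of `K` is the difference of the fiber elements `x + b` and `b`.
    refine ⟨x + b, hafn _ ((mem _).2 ?_), b, hafn _ (hφmem _), by abel⟩
    simpa using S.add_mem hx' hbS
  · rintro ⟨c₁, h₁, c₂, h₂, rfl⟩
    change ((0 : ι → M), c₁ - c₂) ∈ S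
    simpa using S.sub_mem ((mem _).1 h₁.2) ((mem _).1 h₂.2)
end

section
/- Lemma 4.6(2): Let ā ∈ (ι → M) and b ∈ cl(ā, M). Then afn(b, ā) = {b + d : d ∈ grp(b, ā)}, where grp(b, ā) := {c₁ − c₂ : c₁, c₂ ∈ afn(b, ā)}. -/
/-- Lemma 4.6(2): in an additive frame, for `b ∈ cl(ā, M)` one has
`afn(b, ā) = {b + d : d ∈ grp(b, ā)}`. -/
theorem stmt_10
    {M ι : Type*} [AddCommGroup M]
    (L : Set (Set ((ι → M) × M)))
    (hsub : ∀ A ∈ L, ∃ S : AddSubgroup ((ι → M) × M), A = ↑S)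
    (φ : ((ι → M) × M) → Set ((ι → M) × M))
    (hφL : ∀ p, φ p ∈ L)
    (hφmem : ∀ p, p ∈ φ p)
    (hφmin : ∀ p, ∀ ψ ∈ L, p ∈ ψ → φ p ⊆ ψ)
    (kap : Cardinal) (hkreg : kap.IsRegular)
    (a : ι → M) (b : M) (hb : b ∈ cl kap φ a) :
    afn kap φ b a = {x : M | ∃ d ∈ grp kap φ b a, x = b + d} := by
  ext x
  constructor
  · exact fun hx => ⟨x - b, ⟨x, hx, b, ⟨hb, hφmem _⟩, rfl⟩, by abel⟩
  · rintro ⟨d, ⟨c₁, ⟨-, h₁⟩, c₂, ⟨-, h₂⟩, rfl⟩, rfl⟩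
    obtain ⟨S, hS⟩ := hsub _ (hφL (a, b))
    have hx : (a, b + (c₁ - c₂)) ∈ φ (a, b) := by
      have h₀ := hφmem (a, b)
      rw [hS] at h₀ h₁ h₂ ⊢
      -- The first coordinates combine to `a + (a - a) = a`.
      simpa using S.add_mem h₀ (S.sub_mem h₁ h₂)
    -- By minimality the fiber of `b + (c₁ - c₂)` over `a` lies in that of `b`, hence is also small.
    have hfiber : {c : M | (a, c) ∈ φ (a, b + (c₁ - c₂))} ⊆ {c : M | (a, c) ∈ φ (a, b)} :=
      fun _ hc => hφmin _ _ (hφL _) hx hc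
    exact ⟨(Cardinal.mk_le_mk_of_subset hfiber).trans_lt hb, hx⟩
end

section
/- Proposition 4.10(2): Assume κ is an infinite regular cardinal and, additionally: (i) for all A, B ∈ 𝓛 the set {(x̄, y) : ∃ y₁, y₂ ∈ M, (x̄, y₁) ∈ A and (x̄, y₂) ∈ B and y = y₂ − y₁} belongs to 𝓛; (ii) the set {(x̄, y) : y = 0} belongs to 𝓛. Then for every ā ∈ (ι → M), the closure cl(ā, M) is an additive subgroup of M; in particular, if b ∈ cl(ā, M) and c ∈ grp(b, ā) then c ∈ cl(ā, M). -/
/-- Proposition 4.10(2): in a very nice additive frame (conditions (i), (ii)),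
`cl(ā, M)` is an additive subgroup of `M`; in particular it absorbs `grp(b, ā)`
for every `b ∈ cl(ā, M)`. -/
theorem stmt_11
    {M ι : Type*} [AddCommGroup M]
    (L : Set (Set ((ι → M) × M)))
    (hsub : ∀ A ∈ L, ∃ S : AddSubgroup ((ι → M) × M), A = ↑S)
    (φ : ((ι → M) × M) → Set ((ι → M) × M))
    (hφL : ∀ p, φ p ∈ L)
    (hφmem : ∀ p, p ∈ φ p)
    (hφmin : ∀ p, ∀ ψ ∈ L, p ∈ ψ → φ p ⊆ ψ)
    (kap : Cardinal) (hkreg : kap.IsRegular)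
    (hi : ∀ A ∈ L, ∀ B ∈ L,
      {p : (ι → M) × M |
        ∃ y₁ y₂ : M, (p.1, y₁) ∈ A ∧ (p.1, y₂) ∈ B ∧ p.2 = y₂ - y₁} ∈ L)
    (hii : {p : (ι → M) × M | p.2 = 0} ∈ L) :
    ∀ a : ι → M,
      (∃ S : AddSubgroup M, (S : Set M) = cl kap φ a) ∧
      (∀ b ∈ cl kap φ a, ∀ c ∈ grp kap φ b a, c ∈ cl kap φ a) := by
  intro a
  have zero_mem : (0 : M) ∈ cl kap φ a := by
    have hsubset : {c : M | (a, c) ∈ φ (a, 0)} ⊆ {0} := fun c hc =>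
      hφmin (a, 0) _ hii rfl hc
    refine lt_of_le_of_lt (Cardinal.mk_le_mk_of_subset hsubset) ?_
    rw [Cardinal.mk_singleton]
    exact lt_of_lt_of_le Cardinal.one_lt_aleph0 hkreg.aleph0_le
  have sub_mem : ∀ b₂ ∈ cl kap φ a, ∀ b₁ ∈ cl kap φ a, b₂ - b₁ ∈ cl kap φ a := by
    intro b₂ h₂ b₁ h₁
    have hsubset : {c : M | (a, c) ∈ φ (a, b₂ - b₁)} ⊆
        Set.image2 (fun y₂ y₁ => y₂ - y₁)
          {c : M | (a, c) ∈ φ (a, b₂)} {c : M | (a, c) ∈ φ (a, b₁)} := by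
      intro c hc
      obtain ⟨y₁, y₂, hy₁, hy₂, hcy⟩ :=
        hφmin (a, b₂ - b₁) _ (hi _ (hφL (a, b₁)) _ (hφL (a, b₂)))
          ⟨b₁, b₂, hφmem _, hφmem _, rfl⟩ hc
      exact ⟨y₂, hy₂, y₁, hy₁, hcy.symm⟩
    exact ((Cardinal.mk_le_mk_of_subset hsubset).trans Cardinal.mk_image2_le).trans_lt
      (Cardinal.mul_lt_of_lt hkreg.aleph0_le h₂ h₁)
  refine ⟨⟨AddSubgroup.ofSub (cl kap φ a) ⟨0, zero_mem⟩ ?_, rfl⟩, ?_⟩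
  · intro x hx y hy
    rw [← sub_eq_add_neg]
    exact sub_mem x hx y hy
  · rintro b - c ⟨c₁, h₁, c₂, h₂, rfl⟩
    exact sub_mem c₁ h₁.1 c₂ h₂.1
end

section
/- Claim 5.10 (from the proof of the main theorem): Let κ be a regular uncountable cardinal. Suppose that for every n < ω the family 𝓛_n satisfies the κ-chain condition, and suppose the dichotomy (*) holds: for every n and all ā, b̄ ∈ M^n, if φ_ā ⊆ φ_b̄ then φ_ā = φ_b̄. Then the set Γ := {φ_ā : n < ω, ā ∈ M^n} has cardinality < κ. -/
/-!
For each fixed `n`, the dichotomy turns an inclusion between minimal sets `φ n a` into an equality.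
An injective `kap`-sequence of such sets would therefore violate the chain condition, so there are
fewer than `kap` of them. The set in question is the disjoint union of these countably many sets,
and `kap` is regular and uncountable, so its cardinality is also below `kap`.
-/

/-- Claim 5.10: if each family `𝓛 n` of subsets of `M^n` satisfies the κ-chain condition
(κ regular uncountable) and the dichotomy (*) holds, then the set
`Γ = {φ_ā : n < ω, ā ∈ M^n}` has cardinality < κ. -/
theorem stmt_12
    {M : Type*}
    (L : ∀ n : ℕ, Set (Set (Fin n → M)))
    (φ : ∀ n : ℕ, (Fin n → M) → Set (Fin n → M))
    (hφL : ∀ n a, φ n a ∈ L n)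
    (hφmem : ∀ n a, a ∈ φ n a)
    (hφmin : ∀ n a, ∀ ψ ∈ L n, a ∈ ψ → φ n a ⊆ ψ)
    (kap : Cardinal) (hkreg : kap.IsRegular) (hkunc : Cardinal.aleph0 < kap)
    (hchain : ∀ (n : ℕ) (A : Ordinal → Set (Fin n → M)),
      (∀ α : Ordinal, α < kap.ord → A α ∈ L n) →
      ∃ α β : Ordinal, α < β ∧ β < kap.ord ∧ A β ⊆ A α)
    (hdich : ∀ (n : ℕ) (a b : Fin n → M), φ n a ⊆ φ n b → φ n a = φ n b) :
    Cardinal.mk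
      ↥{p : Σ n : ℕ, Set (Fin n → M) | ∃ a : Fin p.1 → M, p.2 = φ p.1 a} < kap := by
  -- For fixed `n`, the distinct minimal sets form an antichain, so there are fewer than `kap`.
  have hlt : ∀ n, Cardinal.mk (Set.range (φ n)) < kap := by
    intro n
    by_contra! hle
    rw [← Cardinal.mk_ord_toType kap] at hle
    obtain ⟨f⟩ := hle
    -- Beyond `kap.ord` the sequence is irrelevant and takes the junk value `∅`.
    obtain ⟨α, β, hαβ, hβ, hsub⟩ := hchain n
      (fun α => if h : α < kap.ord then (f (Ordinal.ToType.mk ⟨α, h⟩) : Set (Fin n → M)) else ∅)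
      (by
        intro α hα
        simp only [dif_pos hα]
        obtain ⟨a, ha⟩ := (f (Ordinal.ToType.mk ⟨α, hα⟩)).2
        rw [← ha]
        exact hφL n a)
    have hα := hαβ.trans hβ
    simp only [dif_pos hα, dif_pos hβ] at hsub
    obtain ⟨a, ha⟩ := (f (Ordinal.ToType.mk ⟨α, hα⟩)).2
    obtain ⟨b, hb⟩ := (f (Ordinal.ToType.mk ⟨β, hβ⟩)).2
    rw [← ha, ← hb] at hsub
    have heq := hdich n b a hsub
    rw [ha, hb] at heq
    have := Ordinal.ToType.mk.injective (f.injective (Subtype.ext heq))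
    exact hαβ.ne' (congrArg Subtype.val this)
  have hsum : Cardinal.sum (fun n => Cardinal.mk (Set.range (φ n))) < kap :=
    Cardinal.sum_lt_lift_of_isRegular hkreg (by simpa using hkunc) hlt
  refine lt_of_le_of_lt ?_ hsum
  rw [← Cardinal.mk_sigma]
  refine Cardinal.mk_le_of_injective
    (f := fun p => ⟨p.1.1, p.1.2, p.2.imp fun _ h => h.symm⟩) ?_
  rintro ⟨⟨n, s⟩, hs⟩ ⟨⟨m, t⟩, ht⟩ h
  obtain ⟨rfl, h⟩ := Sigma.mk.inj_iff.mp h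
  obtain rfl := congrArg Subtype.val (eq_of_heq h)
  rfl
end

section
/- Claim 2.17: Let a₀, a₁, a₂ ∈ Q and set a₃ := a₀ − a₁ + a₂. Suppose u₀ ∈ Set(a₀) and u₁ ∈ Set(a₁), and let u := u₀ ∩ u₁. Then {w ∩ u : w ∈ Set(a₂)} = {w ∩ u : w ∈ Set(a₃)}. -/
/-!
If `b₀`, `b₁` witness `u₀ ∈ Set(a₀)` and `u₁ ∈ Set(a₁)`, then translation by
`(b₀ - b₁, a₀ - a₁)` is a bijection from the fibre of `A` over `a₂` to the fibre over
`a₀ - a₁ + a₂`, because `A` is affine. For `α ∈ u₀ ∩ u₁` the same applies to `B α`, so the traces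
on `u₀ ∩ u₁` agree. One inclusion is `exists_translate`; the other is the same lemma with the
indices `0` and `1` exchanged.
-/

/-- `set(b, a) = {α : (b, a) ∈ B α}` (Definition 2.15). -/
def setb {P Q I : Type*} (B : I → Set (P × Q)) (b : P) (a : Q) : Set I :=
  {α : I | (b, a) ∈ B α}

/-- `Set(a) = {set(b, a) : b ∈ A_a}` (Definition 2.15). -/
def SetA {P Q I : Type*} (A : Set (P × Q)) (B : I → Set (P × Q)) (a : Q) : Set (Set I) :=
  {u : Set I | ∃ b : P, (b, a) ∈ A ∧ u = setb B b a}

/-- Translation by `(b₀ - b₁, a₀ - a₁)` carries the fibre of `A` over `a₂` into the fibre over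
`a₀ - a₁ + a₂`, and preserves membership in every `B α` that contains both `(b₀, a₀)` and
`(b₁, a₁)`; the inverse translation gives the converse of that preservation. -/
theorem exists_translate {P Q I : Type*} [AddCommGroup P] [AddCommGroup Q]
    {A : Set (P × Q)} {B : I → Set (P × Q)}
    (hA : ∀ x ∈ A, ∀ y ∈ A, ∀ z ∈ A, x - y + z ∈ A)
    (hB : ∀ α : I, ∀ x ∈ B α, ∀ y ∈ B α, ∀ z ∈ B α, x - y + z ∈ B α)
    {a₀ a₁ a₂ : Q} {u₀ u₁ w : Set I} (hu₀ : u₀ ∈ SetA A B a₀) (hu₁ : u₁ ∈ SetA A B a₁)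
    (hw : w ∈ SetA A B a₂) :
    ∃ w' ∈ SetA A B (a₀ - a₁ + a₂), w ∩ (u₀ ∩ u₁) = w' ∩ (u₀ ∩ u₁) := by
  obtain ⟨b₀, h₀, rfl⟩ := hu₀
  obtain ⟨b₁, h₁, rfl⟩ := hu₁
  obtain ⟨b, hb, rfl⟩ := hw
  refine ⟨_, ⟨b₀ - b₁ + b, hA _ h₀ _ h₁ _ hb, rfl⟩, ?_⟩
  ext α
  refine and_congr_left fun ⟨k₀, k₁⟩ => ⟨fun h => hB α _ k₀ _ k₁ _ h, fun h => ?_⟩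
  have key := hB α _ k₁ _ k₀ _ h
  have e : (b₁, a₁) - (b₀, a₀) + (b₀ - b₁ + b, a₀ - a₁ + a₂) = (b, a₂) := by
    ext <;> simp only [Prod.mk_sub_mk, Prod.mk_add_mk] <;> abel
  rwa [e] at key

/-- Claim 2.17: with `A` and the `B α` affine (closed under `x - y + z`) and `B α ⊆ A`,
for `a₃ = a₀ - a₁ + a₂`, `u₀ ∈ Set(a₀)`, `u₁ ∈ Set(a₁)` and `u = u₀ ∩ u₁`, one has
`{w ∩ u : w ∈ Set(a₂)} = {w ∩ u : w ∈ Set(a₃)}`. -/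
theorem stmt_16
    {P Q I : Type*} [AddCommGroup P] [AddCommGroup Q]
    (A : Set (P × Q)) (B : I → Set (P × Q))
    (hA : ∀ x ∈ A, ∀ y ∈ A, ∀ z ∈ A, x - y + z ∈ A)
    (hB : ∀ α : I, ∀ x ∈ B α, ∀ y ∈ B α, ∀ z ∈ B α, x - y + z ∈ B α)
    (hBA : ∀ α : I, B α ⊆ A)
    (a₀ a₁ a₂ : Q)
    (u₀ : Set I) (hu₀ : u₀ ∈ SetA A B a₀)
    (u₁ : Set I) (hu₁ : u₁ ∈ SetA A B a₁) :
    {v : Set I | ∃ w ∈ SetA A B a₂, v = w ∩ (u₀ ∩ u₁)} =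
      {v : Set I | ∃ w ∈ SetA A B (a₀ - a₁ + a₂), v = w ∩ (u₀ ∩ u₁)} := by
  ext v
  constructor
  · rintro ⟨w, hw, rfl⟩
    exact exists_translate hA hB hu₀ hu₁ hw
  · rintro ⟨w, hw, rfl⟩
    -- Exchanging `a₀` and `a₁` undoes the translation: `a₁ - a₀ + (a₀ - a₁ + a₂) = a₂`.
    have h := exists_translate hA hB hu₁ hu₀ hw
    rwa [show a₁ - a₀ + (a₀ - a₁ + a₂) = a₂ by abel, Set.inter_comm u₁ u₀] at h
end

section
/- Claim 2.18: Let a₀, a₁, a₂ ∈ Q and set a₃ := a₀ − a₁ + a₂. Define inter(a) := {(w₀, w₁) : w₀ ⊆ w₁ ⊆ I and there exist u₀, u₁ ∈ Set(a) with w₁ ⊆ u₁ and u₀ ∩ w₁ = w₀}. If Υ is a set of pairs (w₀, w₁) with w₀ ⊆ w₁ ⊆ I such that Υ ⊆ inter(a₀) ∩ inter(a₁) ∩ inter(a₂), then Υ ⊆ inter(a₃). -/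
/-- `inter(a)` (Definition 2.15). -/
def inter {P Q I : Type*} (A : Set (P × Q)) (B : I → Set (P × Q)) (a : Q) :
    Set (Set I × Set I) :=
  {p : Set I × Set I | p.1 ⊆ p.2 ∧
    ∃ u₀ ∈ SetA A B a, ∃ u₁ ∈ SetA A B a, p.2 ⊆ u₁ ∧ u₀ ∩ p.2 = p.1}

/-- Claim 2.18: with `A` and the `B α` affine (closed under `x - y + z`) and `B α ⊆ A`,
for `a₃ = a₀ - a₁ + a₂` and any set `Υ` of pairs `(w₀, w₁)` with `w₀ ⊆ w₁`,
if `Υ ⊆ inter(a₀) ∩ inter(a₁) ∩ inter(a₂)` then `Υ ⊆ inter(a₃)`. -/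
theorem stmt_17
    {P Q I : Type*} [AddCommGroup P] [AddCommGroup Q]
    (A : Set (P × Q)) (B : I → Set (P × Q))
    (hA : ∀ x ∈ A, ∀ y ∈ A, ∀ z ∈ A, x - y + z ∈ A)
    (hB : ∀ α : I, ∀ x ∈ B α, ∀ y ∈ B α, ∀ z ∈ B α, x - y + z ∈ B α)
    (hBA : ∀ α : I, B α ⊆ A)
    (a₀ a₁ a₂ : Q)
    (Υ : Set (Set I × Set I))
    (hΥsub : ∀ p ∈ Υ, p.1 ⊆ p.2)
    (hΥ : Υ ⊆ inter A B a₀ ∩ inter A B a₁ ∩ inter A B a₂) :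
    Υ ⊆ inter A B (a₀ - a₁ + a₂) := by
  intro p hp
  obtain ⟨⟨h0, h1⟩, h2⟩ := hΥ hp
  obtain ⟨-, _, ⟨b, hb, rfl⟩, _, ⟨d₀, hd₀, rfl⟩, hs₀, he⟩ := h0
  obtain ⟨-, _, -, _, ⟨d₁, hd₁, rfl⟩, hs₁, -⟩ := h1
  obtain ⟨-, _, -, _, ⟨d₂, hd₂, rfl⟩, hs₂, -⟩ := h2
  refine ⟨hΥsub p hp, _, ⟨b - d₁ + d₂, hA _ hb _ hd₁ _ hd₂, rfl⟩,
    _, ⟨d₀ - d₁ + d₂, hA _ hd₀ _ hd₁ _ hd₂, rfl⟩, ?_, ?_⟩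
  · intro α hα
    exact hB α _ (hs₀ hα) _ (hs₁ hα) _ (hs₂ hα)
  · rw [← he]
    ext α
    refine and_congr_left fun hα => ⟨fun h => ?_, fun h => ?_⟩
    -- Translating back by `(d₁, a₁) - (d₂, a₂)` recovers `(b, a₀)`.
    · have h' := hB α _ h _ (hs₂ hα) _ (hs₁ hα)
      simpa [setb] using h'
    · exact hB α _ h _ (hs₁ hα) _ (hs₂ hα)
end

section
/- Lemma 6.3: Let R be a commutative ring with 1 whose additive group is torsion-free, let M be a torsion-free R-module (r • x = 0 implies r = 0 or x = 0), and let f : M → M be an R-module endomorphism. Let ε* be an ordinal and ⟨N_ε : ε ≤ ε*⟩ a ⊆-decreasing chain of submodules of M with N_{ε*} = {0}, and suppose: (i) f(N_ε) ⊆ N_ε for every ε ≤ ε*; (ii) f maps N₀ onto N₀; (iii) for every ε < ε*, the quotient N_ε / N_{ε+1} is torsion-free: if r ∈ R, r ≠ 0, y ∈ N_ε and r • y ∈ N_{ε+1}, then y ∈ N_{ε+1}; (iv) there are elements x_ε ∈ N_ε with x_ε ∉ N_{ε+1} for every ε < ε*; (v) for every x ∈ N₀ with x ≠ 0 there exist b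 ∈ R with b ≠ 0, n ∈ ℕ, ordinals ε₀ < ε₁ < ⋯ < ε_n < ε*, and a₀, …, a_n ∈ R all nonzero, such that b • x = Σ_{ℓ ≤ n} a_ℓ • x_{ε_ℓ}. Then the restriction of f to N₀ is injective. -/
/-!
Every nonzero `m ∈ N 0` has a *level*: an index `ε < ε*` such that some nonzero multiple of `m` is
congruent modulo `N (ε + 1)` to a nonzero multiple of `x ε`, namely the least index occurring in
the representation of a multiple of `m` by the `x ε`. Over the fraction field of `R` the map `f` is
thus triangular with respect to the `x ε`, and the claim is that its diagonal entries do not vanish.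

This is proved by induction on `ε`. Write `x ε = f z`. The level of `z` cannot be below `ε`, because
`f` preserves lower levels by induction, nor above `ε`, because `f` preserves `N (ε + 1)`. So it
is `ε`, which makes a nonzero multiple of `f (x ε)` congruent to a nonzero multiple of `x ε` modulo
`N (ε + 1)`; hence `f` preserves level `ε`. An element of level `ε` therefore cannot be sent to `0`.
-/

/-- Lemma 6.3: let `R` be a commutative ring with 1 whose additive group is
torsion-free, `M` a torsion-free `R`-module, `f` an `R`-endomorphism of `M`, and
`⟨N ε : ε ≤ ε*⟩` a ⊆-decreasing chain of submodules with `N ε* = 0` satisfying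
(i)–(v). Then `f` restricted to `N 0` is injective. -/
theorem stmt_18
    {R : Type*} [CommRing R] {M : Type*} [AddCommGroup M] [Module R M]
    (hRtf : ∀ n : ℕ, n ≠ 0 → ∀ r : R, n • r = 0 → r = 0)
    (hMtf : ∀ (r : R) (x : M), r • x = 0 → r = 0 ∨ x = 0)
    (f : M →ₗ[R] M)
    (εstar : Ordinal) (N : Ordinal → Submodule R M)
    (hdec : ∀ ε ζ : Ordinal, ε ≤ ζ → ζ ≤ εstar → N ζ ≤ N ε)
    (hbot : N εstar = ⊥)
    (hi : ∀ ε : Ordinal, ε ≤ εstar → ∀ y ∈ N ε, f y ∈ N ε)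
    (hii : ∀ y ∈ N 0, ∃ x ∈ N 0, f x = y)
    (hiii : ∀ ε : Ordinal, ε < εstar → ∀ r : R, r ≠ 0 →
      ∀ y ∈ N ε, r • y ∈ N (ε + 1) → y ∈ N (ε + 1))
    (x : Ordinal → M)
    (hiv : ∀ ε : Ordinal, ε < εstar → x ε ∈ N ε ∧ x ε ∉ N (ε + 1))
    (hv : ∀ m ∈ N 0, m ≠ (0 : M) →
      ∃ b : R, b ≠ 0 ∧ ∃ n : ℕ, ∃ ε : Fin (n + 1) → Ordinal,
        StrictMono ε ∧ (∀ ℓ : Fin (n + 1), ε ℓ < εstar) ∧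
        ∃ a : Fin (n + 1) → R, (∀ ℓ : Fin (n + 1), a ℓ ≠ 0) ∧
          b • m = ∑ ℓ : Fin (n + 1), a ℓ • x (ε ℓ)) :
    Set.InjOn (⇑f) (N 0 : Set M) := by
  -- A nonzero element of `M` forces `R` to be a domain.
  have hdom : ∀ m : M, m ≠ 0 → ∀ r s : R, r ≠ 0 → s ≠ 0 → r * s ≠ 0 := by
    intro m hm r s hr hs h
    have h1 : r • (s • m) = 0 := by rw [smul_smul, h, zero_smul]
    rcases hMtf _ _ h1 with h2 | h2
    · exact hr h2
    · rcases hMtf _ _ h2 with h3 | h3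
      · exact hs h3
      · exact hm h3
  have hlev : ∀ m ∈ N 0, m ≠ 0 → ∃ ε : Ordinal, ε < εstar ∧ ∃ b : R, b ≠ 0 ∧ ∃ a : R, a ≠ 0 ∧
      b • m - a • x ε ∈ N (ε + 1) := by
    intro m hm hm0
    obtain ⟨b, hb, n, ε, hε, hlt, a, ha, h⟩ := hv m hm hm0
    refine ⟨ε 0, hlt 0, b, hb, a 0, ha 0, ?_⟩
    rw [h, Fin.sum_univ_succ, add_sub_cancel_left]
    refine Submodule.sum_mem _ fun i _ => Submodule.smul_mem _ _ ?_
    exact hdec _ _ (Order.add_one_le_of_lt (hε (Fin.succ_pos i))) (hlt _).le (hiv _ (hlt _)).1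
  have key : ∀ ε : Ordinal, ε < εstar → ∀ y : M, ∀ b : R, b ≠ 0 → ∀ a : R, a ≠ 0 →
      b • y - a • x ε ∈ N (ε + 1) → ∀ c : R, c ≠ 0 → c • f y ∉ N (ε + 1) := by
    intro ε
    induction ε using WellFoundedLT.induction with
    | ind ε ih =>
    intro hε
    have hε' : ε + 1 ≤ εstar := Order.add_one_le_of_lt hε
    obtain ⟨hx, hx'⟩ := hiv ε hε
    have hx0 : x ε ≠ 0 := fun h => hx' (h ▸ Submodule.zero_mem _)
    have hdiag : ∀ d : R, d ≠ 0 → d • f (x ε) ∉ N (ε + 1) := by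
      obtain ⟨z, hz, hfz⟩ := hii (x ε) (hdec 0 ε zero_le hε.le hx)
      have hz0 : z ≠ 0 := by
        rintro rfl
        exact hx0 (by rw [← hfz, map_zero])
      obtain ⟨ζ, hζ, b, hb, a, ha, h⟩ := hlev z hz hz0
      rcases lt_trichotomy ζ ε with hlt | rfl | hgt
      · exfalso
        refine ih ζ hlt hζ z b hb a ha h b hb (Submodule.smul_mem _ _ ?_)
        rw [hfz]
        exact hdec _ _ (Order.add_one_le_of_lt hlt) hε.le hx
      · intro d hd hmem
        have h1 := hi _ hε' _ h
        rw [map_sub, map_smul, map_smul, hfz] at h1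
        have h2 : (d * b) • x ζ ∈ N (ζ + 1) := by
          have h3 := Submodule.add_mem _ (Submodule.smul_mem _ d h1) (Submodule.smul_mem _ a hmem)
          convert h3 using 1
          module
        exact hx' (hiii ζ hε _ (hdom _ hx0 d b hd hb) _ hx h2)
      · exfalso
        have hbz : b • z ∈ N (ε + 1) := by
          have h1 := hdec _ _ (Order.add_one_le_of_lt hgt) hζ.le (hiv ζ hζ).1
          have h2 := hdec (ε + 1) (ζ + 1) (add_le_add_left hgt.le 1)
            (Order.add_one_le_of_lt hζ) h
          have h3 := Submodule.add_mem _ h2 (Submodule.smul_mem _ a h1)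
          rwa [sub_add_cancel] at h3
        have h4 := hi _ hε' _ hbz
        rw [map_smul, hfz] at h4
        exact hx' (hiii ε hε b hb _ hx h4)
    intro y b hb a ha h c hc hmem
    refine hdiag (c * a) (hdom _ hx0 c a hc ha) ?_
    have h1 := hi _ hε' _ h
    rw [map_sub, map_smul, map_smul] at h1
    have h3 := Submodule.sub_mem _ (Submodule.smul_mem _ b hmem) (Submodule.smul_mem _ c h1)
    convert h3 using 1
    module
  intro u hu v hv' huv
  by_contra hne
  obtain ⟨ε, hε, b, hb, a, ha, h⟩ :=
    hlev (u - v) (Submodule.sub_mem _ hu hv') (sub_ne_zero.2 hne)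
  refine key ε hε (u - v) b hb a ha h b hb ?_
  rw [map_sub, huv, sub_self, smul_zero]
  exact Submodule.zero_mem _
end
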